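/- Let 3/5 ≤ α ≤ 2/3 and β > 0, and suppose τ(n) ≥ β·n^α for all n ≥ 2. Then for all r ≥ 2 and all n ≥ 2, t^(r)(n) ≥ β_r·(n/(6r))^{α·η_{r-1}}, where η_s = 1/(2^s − 1), β_2 = β, and for r ≥ 3, β_r = min{ min_{2 ≤ p ≤ r−2} β_p·(12r)^{−α·η_{p−1}}, β·2^{−α} } (for r = 3 the inner minimum over p is empty, so β_3 = β·2^{−α}). -/

import Mathlib

/-- A (sub-)matching: a finite set of pairwise disjoint `r`-element subsets
("edges") of the linearly ordered vertex set `ℕ`. -/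
def IsMatching (r : ℕ) (M : Finset (Finset ℕ)) : Prop :=
  (∀ e ∈ M, e.card = r) ∧ ∀ e ∈ M, ∀ f ∈ M, e ≠ f → Disjoint e f

/-- The vertex support of a matching: the union of its edges. -/
def mSupport (M : Finset (Finset ℕ)) : Finset ℕ := M.sup id

/-- An ordered `r`-matching of size `n`: `n` pairwise disjoint `r`-element edges
partitioning `[rn] = {1, …, rn}`. -/
def IsOrderedMatching (r n : ℕ) (M : Finset (Finset ℕ)) : Prop :=
  IsMatching r M ∧ M.card = n ∧ mSupport M = Finset.Icc 1 (r * n)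

/-- Two ordered matchings are isomorphic if some (equivalently, the unique)
order-preserving bijection between their vertex supports maps edges onto edges. -/
def MatchIso (M N : Finset (Finset ℕ)) : Prop :=
  ∃ f : ℕ → ℕ, Set.BijOn f (mSupport M : Set ℕ) (mSupport N : Set ℕ) ∧
    (∀ x ∈ mSupport M, ∀ y ∈ mSupport M, x < y → f x < f y) ∧
    N = M.image fun e => e.image f

/-- `M` contains twins of size `k`: a pair of vertex-disjoint isomorphic
sub-matchings of `M`, each with `k` edges. -/
def HasTwins (M : Finset (Finset ℕ)) (k : ℕ) : Prop :=
  ∃ M₁ M₂ : Finset (Finset ℕ), M₁ ⊆ M ∧ M₂ ⊆ M ∧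
    Disjoint (mSupport M₁) (mSupport M₂) ∧ MatchIso M₁ M₂ ∧
    M₁.card = k ∧ M₂.card = k

/-- `t(M)`: the maximum size of twins in `M`. -/
noncomputable def twinMax (M : Finset (Finset ℕ)) : ℕ := sSup {k | HasTwins M k}

/-- `t^(r)(n)`: the minimum of `t(M)` over all ordered `r`-matchings of size `n`. -/
noncomputable def minTwins (r n : ℕ) : ℕ :=
  sInf {t | ∃ M, IsOrderedMatching r n M ∧ twinMax M = t}

/-- A permutation `π` of `[n]` has twins of length `k`: two order-isomorphic
subsequences occupying disjoint sets of positions. -/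
def PermTwins {n : ℕ} (π : Equiv.Perm (Fin n)) (k : ℕ) : Prop :=
  ∃ a b : Fin k → Fin n, StrictMono a ∧ StrictMono b ∧
    (∀ i j, a i ≠ b j) ∧ ∀ i j, (π (a i) < π (a j) ↔ π (b i) < π (b j))

/-- `τ(n)`: the largest `k` such that every permutation of `[n]` has twins of length `k`. -/
noncomputable def permTau (n : ℕ) : ℕ :=
  sSup {k | ∀ π : Equiv.Perm (Fin n), PermTwins π k}

/-- An `r`-pattern, represented by its canonical representative: an ordered
`r`-matching of size `2` (on the vertex set `[2r]`). Every isomorphism class of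
ordered `r`-matchings of size `2` contains exactly one such representative. -/
def IsPattern (r : ℕ) (P : Finset (Finset ℕ)) : Prop := IsOrderedMatching r 2 P

/-- A `P`-clique: a matching all of whose pairs of (distinct) edges form the pattern `P`. -/
def IsPClique (P M : Finset (Finset ℕ)) : Prop :=
  ∀ e ∈ M, ∀ f ∈ M, e ≠ f → MatchIso {e, f} P

/-- `L(M)`: the size of the largest sub-matching of `M` that is a `P`-clique,
over all `r`-patterns `P`. -/
noncomputable def cliqueMax (r : ℕ) (M : Finset (Finset ℕ)) : ℕ :=
  sSup {k | ∃ P, IsPattern r P ∧ ∃ M' ⊆ M, IsPClique P M' ∧ M'.card = k}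

/-- `L_r(n)`: the minimum of `L(M)` over all ordered `r`-matchings of size `n`. -/
noncomputable def minClique (r n : ℕ) : ℕ :=
  sInf {l | ∃ M, IsOrderedMatching r n M ∧ cliqueMax r M = l}

/-- `η_s = 1/(2^s - 1)`. -/
noncomputable def etaExp (s : ℕ) : ℝ := 1 / ((2 : ℝ) ^ s - 1)


/-! ### Vertices of an edge in increasing order -/

/-- the `i`-th smallest vertex of `e` (zero-based). -/
noncomputable def vtx (e : Finset ℕ) (i : ℕ) : ℕ := Nat.nth (fun x => x ∈ e) i

lemma vtx_mem {e : Finset ℕ} {i : ℕ} (h : i < e.card) : vtx e i ∈ e := by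
  have hf : ({x : ℕ | x ∈ e}).Finite := e.finite_toSet
  have : hf.toFinset = e := by ext; simp
  exact Nat.nth_mem_of_lt_card hf (by rw [this]; exact h)

lemma vtx_lt {e : Finset ℕ} {i j : ℕ} (hij : i < j) (h : j < e.card) : vtx e i < vtx e j := by
  have hf : ({x : ℕ | x ∈ e}).Finite := e.finite_toSet
  have : hf.toFinset = e := by ext; simp
  exact Nat.nth_lt_nth_of_lt_card hf hij (by rw [this]; exact h)

lemma vtx_le {e : Finset ℕ} {i j : ℕ} (hij : i ≤ j) (h : j < e.card) : vtx e i ≤ vtx e j := by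
  rcases hij.eq_or_lt with rfl | h'
  · exact le_rfl
  · exact (vtx_lt h' h).le

lemma vtx_lt_iff {e : Finset ℕ} {i j : ℕ} (hi : i < e.card) (hj : j < e.card) :
    vtx e i < vtx e j ↔ i < j := by
  constructor
  · intro h
    by_contra hn
    exact absurd (vtx_le (not_lt.mp hn) hi) (not_le.mpr h)
  · intro h; exact vtx_lt h hj

lemma exists_vtx {e : Finset ℕ} {x : ℕ} (h : x ∈ e) : ∃ i < e.card, vtx e i = x := by
  have hf : ({x : ℕ | x ∈ e}).Finite := e.finite_toSet
  have h2 : hf.toFinset = e := by ext; simp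
  obtain ⟨i, hi, hx⟩ := Nat.exists_lt_card_finite_nth_eq hf (x := x) h
  exact ⟨i, by rw [h2] at hi; exact hi, hx⟩

lemma mem_mSupport {M : Finset (Finset ℕ)} {x : ℕ} : x ∈ mSupport M ↔ ∃ e ∈ M, x ∈ e := by
  simp [mSupport, Finset.mem_sup]

lemma IsMatching.subset {r : ℕ} {M N : Finset (Finset ℕ)} (h : IsMatching r M) (hs : N ⊆ M) :
    IsMatching r N :=
  ⟨fun e he => h.1 e (hs he), fun e he f hf => h.2 e (hs he) f (hs hf)⟩

lemma IsMatching.vtx_ne {r : ℕ} {M : Finset (Finset ℕ)} (h : IsMatching r M) {e f : Finset ℕ}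
    (he : e ∈ M) (hf : f ∈ M) (hef : e ≠ f) {i j : ℕ} (hi : i < r) (hj : j < r) :
    vtx e i ≠ vtx f j := by
  intro heq
  have h1 : vtx e i ∈ e := vtx_mem (by rw [h.1 e he]; exact hi)
  have h2 : vtx f j ∈ f := vtx_mem (by rw [h.1 f hf]; exact hj)
  rw [← heq] at h2
  exact Finset.disjoint_left.mp (h.2 e he f hf hef) h1 h2

lemma HasTwins.mono {M N : Finset (Finset ℕ)} {k : ℕ} (h : HasTwins M k) (hs : M ⊆ N) :
    HasTwins N k := by
  obtain ⟨A, B, hA, hB, h⟩ := h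
  exact ⟨A, B, hA.trans hs, hB.trans hs, h⟩

/-- criterion for twins. -/
lemma hasTwins_of_seq {r m : ℕ} (hr : 0 < r) {M : Finset (Finset ℕ)} (hM : IsMatching r M)
    (a b : Fin m → Finset ℕ) (ha : ∀ p, a p ∈ M) (hb : ∀ p, b p ∈ M)
    (hai : Function.Injective a) (hbi : Function.Injective b) (hab : ∀ p q, a p ≠ b q)
    (hord : ∀ p q, p ≠ q → ∀ i < r, ∀ j < r,
      (vtx (a p) i < vtx (a q) j ↔ vtx (b p) i < vtx (b q) j)) :
    HasTwins M m := by
  classical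
  have hca : ∀ p, (a p).card = r := fun p => hM.1 _ (ha p)
  have hcb : ∀ p, (b p).card = r := fun p => hM.1 _ (hb p)
  have hord' : ∀ p q, ∀ i < r, ∀ j < r,
      (vtx (a p) i < vtx (a q) j ↔ vtx (b p) i < vtx (b q) j) := by
    intro p q i hi j hj
    by_cases hpq : p = q
    · subst hpq
      rw [vtx_lt_iff (by rw [hca]; exact hi) (by rw [hca]; exact hj),
        vtx_lt_iff (by rw [hcb]; exact hi) (by rw [hcb]; exact hj)]
    · exact hord p q hpq i hi j hj
  have hex : ∀ x : ℕ, ∃ y : ℕ, ∀ p, ∀ i < r, vtx (a p) i = x → vtx (b p) i = y := by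
    intro x
    by_cases hx : ∃ p, ∃ i < r, vtx (a p) i = x
    · obtain ⟨p, i, hi, hx⟩ := hx
      refine ⟨vtx (b p) i, fun q j hj hq => ?_⟩
      have h1 := hord' p q i hi j hj
      have h2 := hord' q p j hj i hi
      rw [hx, hq] at h1 h2
      simp only [lt_irrefl, false_iff, not_lt] at h1 h2
      exact le_antisymm h1 h2
    · push Not at hx
      exact ⟨0, fun p i hi h => absurd h (hx p i hi)⟩
  choose f hf using hex
  have hfv : ∀ p, ∀ i < r, f (vtx (a p) i) = vtx (b p) i := fun p i hi => (hf _ p i hi rfl).symm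
  have hmono : ∀ x ∈ mSupport (Finset.univ.image a), ∀ y ∈ mSupport (Finset.univ.image a),
      x < y → f x < f y := by
    intro x hx y hy hxy
    rw [mem_mSupport] at hx hy
    obtain ⟨e, he, hx⟩ := hx
    obtain ⟨e', he', hy⟩ := hy
    simp only [Finset.mem_image, Finset.mem_univ, true_and] at he he'
    obtain ⟨p, rfl⟩ := he
    obtain ⟨q, rfl⟩ := he'
    obtain ⟨i, hi, rfl⟩ := exists_vtx hx
    obtain ⟨j, hj, rfl⟩ := exists_vtx hy
    rw [hca] at hi hj
    rw [hfv p i hi, hfv q j hj]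
    exact (hord' p q i hi j hj).mp hxy
  have himg : ∀ p, (a p).image f = b p := by
    intro p
    ext y
    simp only [Finset.mem_image]
    constructor
    · rintro ⟨x, hx, rfl⟩
      obtain ⟨i, hi, rfl⟩ := exists_vtx hx
      rw [hca] at hi
      rw [hfv p i hi]
      exact vtx_mem (by rw [hcb]; exact hi)
    · intro hy
      obtain ⟨i, hi, rfl⟩ := exists_vtx hy
      rw [hcb] at hi
      exact ⟨_, vtx_mem (by rw [hca]; exact hi), hfv p i hi⟩
  refine ⟨Finset.univ.image a, Finset.univ.image b, ?_, ?_, ?_, ⟨f, ⟨?_, ?_, ?_⟩, hmono, ?_⟩, ?_, ?_⟩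
  · intro e he
    simp only [Finset.mem_image, Finset.mem_univ, true_and] at he
    obtain ⟨p, rfl⟩ := he
    exact ha p
  · intro e he
    simp only [Finset.mem_image, Finset.mem_univ, true_and] at he
    obtain ⟨p, rfl⟩ := he
    exact hb p
  · rw [Finset.disjoint_left]
    intro x hx hy
    rw [mem_mSupport] at hx hy
    simp only [Finset.mem_image, Finset.mem_univ, true_and, exists_exists_eq_and] at hx hy
    obtain ⟨p, hx⟩ := hx
    obtain ⟨q, hy⟩ := hy
    exact Finset.disjoint_left.mp (hM.2 _ (ha p) _ (hb q) (hab p q)) hx hy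
  · intro x hx
    rw [Finset.mem_coe, mem_mSupport] at hx ⊢
    simp only [Finset.mem_image, Finset.mem_univ, true_and, exists_exists_eq_and] at hx ⊢
    obtain ⟨p, hx⟩ := hx
    exact ⟨p, by rw [← himg p]; exact Finset.mem_image_of_mem f hx⟩
  · intro x hx y hy hxy
    rcases lt_trichotomy x y with h | h | h
    · exact absurd hxy (hmono x hx y hy h).ne
    · exact h
    · exact absurd hxy.symm (hmono y hy x hx h).ne
  · intro y hy
    rw [Finset.mem_coe, mem_mSupport] at hy
    simp only [Finset.mem_image, Finset.mem_univ, true_and, exists_exists_eq_and] at hy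
    obtain ⟨p, hy⟩ := hy
    rw [← himg p, Finset.mem_image] at hy
    obtain ⟨x, hx, rfl⟩ := hy
    refine ⟨x, ?_, rfl⟩
    rw [Finset.mem_coe, mem_mSupport]
    exact ⟨a p, Finset.mem_image_of_mem a (Finset.mem_univ p), hx⟩
  · rw [Finset.image_image]
    congr 1
    funext p
    exact (himg p).symm
  · rw [Finset.card_image_of_injective _ hai]; simp
  · rw [Finset.card_image_of_injective _ hbi]; simp

/-- single edges are twins. -/
lemma hasTwins_one {r : ℕ} (hr : 0 < r) {M : Finset (Finset ℕ)} (hM : IsMatching r M)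
    (h2 : 2 ≤ M.card) : HasTwins M 1 := by
  obtain ⟨e, he, f, hf, hef⟩ := Finset.one_lt_card.mp (show 1 < M.card by omega)
  refine hasTwins_of_seq hr hM (fun _ : Fin 1 => e) (fun _ : Fin 1 => f) (fun _ => he) (fun _ => hf)
    (Function.injective_of_subsingleton _) (Function.injective_of_subsingleton _)
    (fun _ _ => hef) ?_
  intro p q hpq
  exact absurd (Subsingleton.elim p q) hpq

/-- concatenating twins. -/
lemma hasTwins_add {M N : Finset (Finset ℕ)} {x k l : ℕ} (hL : ∀ e ∈ M, ∀ v ∈ e, v < x)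
    (hne : ∀ e ∈ M, e.Nonempty)
    (hR : ∀ e ∈ N, ∀ v ∈ e, x ≤ v) (hk : HasTwins M k) (hl : HasTwins N l) :
    HasTwins (M ∪ N) (k + l) := by
  classical
  obtain ⟨A, B, hA, hB, hAB, ⟨f, hf, hfm, hfi⟩, cA, cB⟩ := hk
  obtain ⟨A', B', hA', hB', hAB', ⟨g, hg, hgm, hgi⟩, cA', cB'⟩ := hl
  have sup_union : ∀ U V : Finset (Finset ℕ), mSupport (U ∪ V) = mSupport U ∪ mSupport V := by
    intro U V; simp [mSupport, Finset.sup_union]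
  have sL : ∀ U ⊆ M, ∀ v ∈ mSupport U, v < x := by
    intro U hU v hv
    obtain ⟨e, he, hv⟩ := mem_mSupport.mp hv
    exact hL e (hU he) v hv
  have sR : ∀ U ⊆ N, ∀ v ∈ mSupport U, x ≤ v := by
    intro U hU v hv
    obtain ⟨e, he, hv⟩ := mem_mSupport.mp hv
    exact hR e (hU he) v hv
  have dis : ∀ U ⊆ M, ∀ V ⊆ N, Disjoint (mSupport U) (mSupport V) := by
    intro U hU V hV
    rw [Finset.disjoint_left]
    intro v h1 h2
    have := sL U hU v h1
    have := sR V hV v h2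
    omega
  have dis' : ∀ U ⊆ M, ∀ V ⊆ N, Disjoint U V := by
    intro U hU V hV
    rw [Finset.disjoint_left]
    intro e h1 h2
    obtain ⟨v, hv⟩ := hne e (hU h1)
    have := hL e (hU h1) v hv
    have := hR e (hV h2) v hv
    omega
  let F : ℕ → ℕ := fun v => if v < x then f v else g v
  have Ff : ∀ v ∈ mSupport A, F v = f v := fun v hv => if_pos (sL A hA v hv)
  have Fg : ∀ v ∈ mSupport A', F v = g v := fun v hv => if_neg (not_lt.mpr (sR A' hA' v hv))
  have hfB : ∀ v ∈ mSupport A, f v ∈ mSupport B := fun v hv => hf.mapsTo hv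
  have hgB : ∀ v ∈ mSupport A', g v ∈ mSupport B' := fun v hv => hg.mapsTo hv
  have hmono : ∀ u ∈ mSupport (A ∪ A'), ∀ v ∈ mSupport (A ∪ A'), u < v → F u < F v := by
    intro u hu v hv huv
    rw [sup_union, Finset.mem_union] at hu hv
    rcases hu with hu | hu <;> rcases hv with hv | hv
    · rw [Ff u hu, Ff v hv]; exact hfm u hu v hv huv
    · rw [Ff u hu, Fg v hv]
      exact lt_of_lt_of_le (sL B hB _ (hfB u hu)) (sR B' hB' _ (hgB v hv))
    · have := sR A' hA' u hu
      have := sL A hA v hv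
      omega
    · rw [Fg u hu, Fg v hv]; exact hgm u hu v hv huv
  refine ⟨A ∪ A', B ∪ B', Finset.union_subset_union hA hA', Finset.union_subset_union hB hB',
    ?_, ⟨F, ⟨?_, ?_, ?_⟩, hmono, ?_⟩, ?_, ?_⟩
  · rw [sup_union, sup_union, Finset.disjoint_union_left, Finset.disjoint_union_right,
      Finset.disjoint_union_right]
    exact ⟨⟨hAB, dis A hA B' hB'⟩, (dis B hB A' hA').symm, hAB'⟩
  · intro v hv
    rw [Finset.mem_coe, sup_union, Finset.mem_union] at hv ⊢
    rcases hv with hv | hv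
    · left; rw [Ff v hv]; exact hfB v hv
    · right; rw [Fg v hv]; exact hgB v hv
  · intro u hu v hv huv
    rcases lt_trichotomy u v with h | h | h
    · exact absurd huv (hmono u hu v hv h).ne
    · exact h
    · exact absurd huv.symm (hmono v hv u hu h).ne
  · intro y hy
    rw [Finset.mem_coe, sup_union, Finset.mem_union] at hy
    rcases hy with hy | hy
    · obtain ⟨v, hv, rfl⟩ := hf.surjOn hy
      exact ⟨v, by rw [Finset.mem_coe, sup_union, Finset.mem_union]; exact Or.inl hv, Ff v hv⟩
    · obtain ⟨v, hv, rfl⟩ := hg.surjOn hy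
      exact ⟨v, by rw [Finset.mem_coe, sup_union, Finset.mem_union]; exact Or.inr hv, Fg v hv⟩
  · rw [Finset.image_union, hfi, hgi]
    congr 1
    · apply Finset.image_congr
      intro e he
      apply Finset.image_congr
      intro v hv
      exact (Ff v (mem_mSupport.mpr ⟨e, he, hv⟩)).symm
    · apply Finset.image_congr
      intro e he
      apply Finset.image_congr
      intro v hv
      exact (Fg v (mem_mSupport.mpr ⟨e, he, hv⟩)).symm
  · rw [Finset.card_union_of_disjoint (dis' A hA A' hA'), cA, cA']
  · rw [Finset.card_union_of_disjoint (dis' B hB B' hB'), cB', cB]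

/-! ### Combinatorial lemmas -/

/-- a digraph with in-degrees at most `D` has a large independent set. -/
lemma exists_indep {V : Type*} [DecidableEq V] (R : V → V → Prop) [DecidableRel R] (D : ℕ) :
    ∀ (N : ℕ) (M : Finset V), M.card = N →
      (∀ f ∈ M, (M.filter (fun e => R e f)).card ≤ D) →
      ∃ I ⊆ M, M.card ≤ (2 * D + 1) * I.card ∧ ∀ e ∈ I, ∀ f ∈ I, e ≠ f → ¬ R e f := by
  intro N
  induction N using Nat.strong_induction_on with
  | _ N ih =>
  intro M hN hdeg
  rcases M.eq_empty_or_nonempty with rfl | hne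
  · exact ⟨∅, Finset.Subset.refl _, by simp, by simp⟩
  have hsum : ∑ e ∈ M, (M.filter (fun f => R e f)).card ≤ ∑ e ∈ M, D := by
    have : ∑ e ∈ M, (M.filter (fun f => R e f)).card = ∑ f ∈ M, (M.filter (fun e => R e f)).card := by
      simp only [Finset.card_filter]
      exact Finset.sum_comm
    rw [this]
    exact Finset.sum_le_sum hdeg
  obtain ⟨v, hv, hvD⟩ := Finset.exists_le_of_sum_le hne hsum
  let W := M.filter (fun f => ¬ (f = v ∨ R v f ∨ R f v))
  have hWM : W ⊆ M := Finset.filter_subset _ _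
  have hvW : v ∉ W := by simp [W]
  have hlt : W.card < N := by
    rw [← hN]
    exact Finset.card_lt_card ⟨hWM, fun h => hvW (h hv)⟩
  obtain ⟨I, hIW, hIc, hI⟩ := ih W.card hlt W rfl (fun f hf =>
    (Finset.card_le_card (Finset.filter_subset_filter _ hWM)).trans (hdeg f (hWM hf)))
  have hvI : v ∉ I := fun h => hvW (hIW h)
  refine ⟨insert v I, ?_, ?_, ?_⟩
  · intro e he
    rcases Finset.mem_insert.mp he with rfl | he
    · exact hv
    · exact hWM (hIW he)
  · rw [Finset.card_insert_of_notMem hvI]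
    have hsub : M ⊆ W ∪ ({v} ∪ (M.filter (fun f => R v f) ∪ M.filter (fun f => R f v))) := by
      intro f hf
      simp only [W, Finset.mem_union, Finset.mem_filter, Finset.mem_singleton]
      tauto
    have h1 := Finset.card_le_card hsub
    have h2 := Finset.card_union_le W ({v} ∪ (M.filter (fun f => R v f) ∪ M.filter (fun f => R f v)))
    have h3 := Finset.card_union_le {v} (M.filter (fun f => R v f) ∪ M.filter (fun f => R f v))
    have h4 := Finset.card_union_le (M.filter (fun f => R v f)) (M.filter (fun f => R f v))
    have h5 := hdeg v hv
    rw [Finset.card_singleton] at h3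
    rw [mul_add]
    omega
  · intro e he f hf hef
    rcases Finset.mem_insert.mp he with he1 | he1 <;>
      rcases Finset.mem_insert.mp hf with hf1 | hf1
    · exact absurd (he1.trans hf1.symm) hef
    · have := (Finset.mem_filter.mp (hIW hf1)).2
      subst he1
      tauto
    · have := (Finset.mem_filter.mp (hIW he1)).2
      subst hf1
      tauto
    · exact hI e he1 f hf1 hef

/-- Erdős–Szekeres. -/
lemma erdos_szekeres_aux {V : Type*} [DecidableEq V] (g h : V → ℕ) (M : Finset V)
    (hg : Set.InjOn g M) (hh : Set.InjOn h M) (a : ℕ) (hc : a * a ≤ M.card) :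
    ∃ M' ⊆ M, a ≤ M'.card ∧
      ((∀ e ∈ M', ∀ f ∈ M', (g e < g f ↔ h e < h f)) ∨
       (∀ e ∈ M', ∀ f ∈ M', (g e < g f ↔ h f < h e))) := by
  classical
  rcases Nat.eq_zero_or_pos a with rfl | ha
  · exact ⟨∅, by simp, by simp, by simp⟩
  let P : V → ℕ → Prop := fun e k => ∃ C ⊆ M, C.card = k ∧
    (∀ x ∈ C, ∀ y ∈ C, (g x < g y ↔ h x < h y)) ∧ e ∈ C ∧ (∀ x ∈ C, g x ≤ g e)
  have hP1 : ∀ e ∈ M, P e 1 := fun e he => ⟨{e}, by simpa using he, by simp, by simp, by simp, by simp⟩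
  have hPb : ∀ e k, P e k → k ≤ M.card := by
    rintro e k ⟨C, hC, rfl, -⟩
    exact Finset.card_le_card hC
  let H : V → ℕ := fun e => Nat.findGreatest (P e) M.card
  by_cases hbig : ∃ e ∈ M, a ≤ H e
  · obtain ⟨e, he, hae⟩ := hbig
    have : P e (H e) := Nat.findGreatest_spec (P := P e) (m := 1) (hPb e 1 (hP1 e he)) (hP1 e he)
    obtain ⟨C, hC, hCc, hC2, -⟩ := this
    exact ⟨C, hC, by omega, Or.inl hC2⟩
  · push Not at hbig
    have hmap : ∀ e ∈ M, H e ∈ Finset.Ico 1 a := by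
      intro e he
      rw [Finset.mem_Ico]
      exact ⟨Nat.le_findGreatest (hPb e 1 (hP1 e he)) (hP1 e he), hbig e he⟩
    have hlt : (Finset.Ico 1 a).card * (a - 1) < M.card := by
      rw [Nat.card_Ico]
      obtain ⟨b, rfl⟩ : ∃ b, a = b + 1 := ⟨a - 1, by omega⟩
      simp only [Nat.add_sub_cancel]
      nlinarith
    obtain ⟨y, hy, hyc⟩ := Finset.exists_lt_card_fiber_of_mul_lt_card_of_maps_to hmap hlt
    refine ⟨M.filter (fun e => H e = y), Finset.filter_subset _ _, by omega, Or.inr ?_⟩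
    -- key: comparable elements have different heights
    have key : ∀ e ∈ M, ∀ f ∈ M, g e < g f → h e < h f → H e < H f := by
      intro e he f hf hgl hhl
      have hPe : P e (H e) :=
        Nat.findGreatest_spec (P := P e) (m := 1) (hPb e 1 (hP1 e he)) (hP1 e he)
      obtain ⟨C, hC, hCc, hC2, heC, hCe⟩ := hPe
      have hfC : f ∉ C := fun hfC => absurd (hCe f hfC) (not_le.mpr hgl)
      have hCh : ∀ x ∈ C, h x ≤ h e := by
        intro x hx
        by_contra hn
        have := (hC2 e heC x hx).mpr (not_le.mp hn)
        exact absurd (hCe x hx) (not_le.mpr this)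
      have hPf : P f (H e + 1) := by
        refine ⟨insert f C, ?_, ?_, ?_, ?_, ?_⟩
        · intro x hx
          rcases Finset.mem_insert.mp hx with rfl | hx
          · exact hf
          · exact hC hx
        · rw [Finset.card_insert_of_notMem hfC, hCc]
        · intro x hx z hz
          rcases Finset.mem_insert.mp hx with hx1 | hx1 <;>
            rcases Finset.mem_insert.mp hz with hz1 | hz1
          · subst hx1; subst hz1; simp
          · have := hCe z hz1
            have := hCh z hz1
            subst hx1
            constructor <;> intro _ <;> omega
          · have := hCe x hx1
            have := hCh x hx1
            subst hz1
            constructor <;> intro _ <;> omega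
          · exact hC2 x hx1 z hz1
        · simp
        · intro x hx
          rcases Finset.mem_insert.mp hx with rfl | hx
          · exact le_rfl
          · exact (hCe x hx).trans hgl.le
      exact Nat.lt_of_succ_le (Nat.le_findGreatest (hPb f _ hPf) hPf)
    intro e he f hf
    rw [Finset.mem_filter] at he hf
    by_cases hef : e = f
    · subst hef; simp
    have hgn : g e ≠ g f := fun h' => hef (hg he.1 hf.1 h')
    have hhn : h e ≠ h f := fun h' => hef (hh he.1 hf.1 h')
    have k1 := key e he.1 f hf.1
    have k2 := key f hf.1 e he.1
    constructor
    · intro h1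
      by_contra h2
      have := k1 h1 (by omega)
      omega
    · intro h1
      by_contra h2
      have := k2 (by omega) h1
      omega

lemma erdos_szekeres_multi {V : Type*} [DecidableEq V] (g : V → ℕ) (h : ℕ → V → ℕ) (S : ℕ)
    (K : Finset ℕ) : ∀ M : Finset V, Set.InjOn g M → (∀ j ∈ K, Set.InjOn (h j) M) →
    S ^ (2 ^ K.card) ≤ M.card →
    ∃ M' ⊆ M, S ≤ M'.card ∧ ∀ j ∈ K,
      ((∀ e ∈ M', ∀ f ∈ M', (g e < g f ↔ h j e < h j f)) ∨
       (∀ e ∈ M', ∀ f ∈ M', (g e < g f ↔ h j f < h j e))) := by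
  classical
  induction K using Finset.induction_on with
  | empty =>
    intro M _ _ hc
    exact ⟨M, Finset.Subset.refl _, by simpa using hc, by simp⟩
  | insert j K hj ih =>
    intro M hg hh hc
    rw [Finset.card_insert_of_notMem hj, pow_succ, pow_mul, sq] at hc
    obtain ⟨M1, hM1, hc1, h1⟩ := erdos_szekeres_aux g (h j) M hg (hh j (by simp)) _ hc
    obtain ⟨M2, hM2, hc2, h2⟩ := ih M1 (hg.mono (by exact_mod_cast hM1))
      (fun i hi => (hh i (by simp [hi])).mono (by exact_mod_cast hM1)) hc1
    refine ⟨M2, hM2.trans hM1, hc2, fun i hi => ?_⟩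
    rcases Finset.mem_insert.mp hi with rfl | hi
    · rcases h1 with h1 | h1
      · exact Or.inl fun e he f hf => h1 e (hM2 he) f (hM2 hf)
      · exact Or.inr fun e he f hf => h1 e (hM2 he) f (hM2 hf)
    · exact h2 i hi

/-! ### Permutation twins -/

lemma permTwins_le {n k : ℕ} {π : Equiv.Perm (Fin n)} (h : PermTwins π k) : 2 * k ≤ n := by
  obtain ⟨a, b, ha, hb, hab, -⟩ := h
  have hinj : Function.Injective (Sum.elim a b) :=
    ha.injective.sumElim hb.injective hab
  have := Fintype.card_le_of_injective _ hinj
  simp at this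
  omega

lemma permTau_spec (n : ℕ) (π : Equiv.Perm (Fin n)) : PermTwins π (permTau n) := by
  have hne : {k | ∀ π : Equiv.Perm (Fin n), PermTwins π k}.Nonempty :=
    ⟨0, fun π => ⟨Fin.elim0, Fin.elim0, fun i => i.elim0, fun i => i.elim0, fun i => i.elim0,
      fun i => i.elim0⟩⟩
  have hb : BddAbove {k | ∀ π : Equiv.Perm (Fin n), PermTwins π k} :=
    ⟨n, fun k hk => by have := permTwins_le (hk 1); omega⟩
  exact Nat.sSup_mem hne hb π

lemma permTau_le (n : ℕ) : 2 * permTau n ≤ n := permTwins_le (permTau_spec n 1)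

lemma exists_perm {n : ℕ} (w : Fin n → ℕ) (hw : Function.Injective w) :
    ∃ π : Equiv.Perm (Fin n), ∀ i j, π i < π j ↔ w i < w j := by
  classical
  have hc : (Finset.univ.image w).card = n := by
    rw [Finset.card_image_of_injective _ hw]; simp
  let o := (Finset.univ.image w).orderIsoOfFin hc
  let φ : Fin n → Fin n := fun i => o.symm ⟨w i, Finset.mem_image_of_mem w (Finset.mem_univ i)⟩
  have hφ : ∀ i j, φ i < φ j ↔ w i < w j := by
    intro i j
    simp only [φ, OrderIso.lt_iff_lt, Subtype.mk_lt_mk]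
  have hinj : Function.Injective φ := by
    intro i j hij
    apply hw
    have h1 := hφ i j
    have h2 := hφ j i
    rw [hij] at h1 h2
    simp only [lt_irrefl, false_iff, not_lt] at h1 h2
    exact le_antisymm h2 h1
  exact ⟨Equiv.ofBijective φ (Finite.injective_iff_bijective.mp hinj), hφ⟩

/-- enumeration of a finite set along an injective function. -/
lemma exists_enum {V : Type*} [DecidableEq V] (g : V → ℕ) (M : Finset V) (hg : Set.InjOn g M) :
    ∃ u : Fin M.card → V, (∀ i, u i ∈ M) ∧ ∀ i j, g (u i) < g (u j) ↔ i < j := by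
  classical
  have hc : (M.image g).card = M.card := Finset.card_image_of_injOn hg
  let o := (M.image g).orderEmbOfFin hc
  have hex : ∀ i, ∃ e ∈ M, g e = o i := fun i =>
    Finset.mem_image.mp ((M.image g).orderEmbOfFin_mem hc i)
  choose u hu hgu using hex
  refine ⟨u, hu, fun i j => ?_⟩
  rw [hgu, hgu]
  exact o.lt_iff_lt

/-! ### Block structures -/

/-- the edges of `M` are cut in front of each index in `K`. -/
def Str (K : Finset ℕ) (M : Finset (Finset ℕ)) : Prop :=
  ∀ j ∈ K, ∀ e ∈ M, ∀ f ∈ M, vtx e (j - 1) < vtx f j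

/-- first index of the block of `i`. -/
def st (K : Finset ℕ) (i : ℕ) : ℕ := (K.filter (fun j => j ≤ i)).sup id

lemma st_le (K : Finset ℕ) (i : ℕ) : st K i ≤ i := by
  apply Finset.sup_le
  intro j hj
  exact (Finset.mem_filter.mp hj).2

lemma le_st {K : Finset ℕ} {i j : ℕ} (hj : j ∈ K) (hji : j ≤ i) : j ≤ st K i :=
  Finset.le_sup (f := id) (Finset.mem_filter.mpr ⟨hj, hji⟩)

lemma st_mem (K : Finset ℕ) (i : ℕ) : st K i = 0 ∨ st K i ∈ K := by
  rcases (K.filter (fun j => j ≤ i)).eq_empty_or_nonempty with h | h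
  · left; simp [st, h]
  · right
    obtain ⟨j, hj, hje⟩ := Finset.exists_mem_eq_sup _ h id
    have : st K i = j := hje
    rw [this]
    exact (Finset.mem_filter.mp hj).1

lemma st_mono (K : Finset ℕ) {i j : ℕ} (h : i ≤ j) : st K i ≤ st K j := by
  apply Finset.sup_le
  intro l hl
  have := Finset.mem_filter.mp hl
  exact le_st this.1 (this.2.trans h)

lemma st_succ_of_notMem {K : Finset ℕ} {i : ℕ} (h : i + 1 ∉ K) : st K (i + 1) = st K i := by
  apply le_antisymm _ (st_mono K (Nat.le_succ i))
  apply Finset.sup_le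
  intro l hl
  have := Finset.mem_filter.mp hl
  refine le_st this.1 ?_
  rcases this.2.eq_or_lt with h' | h'
  · rw [h'] at this; exact absurd this.1 h
  · exact Nat.lt_succ_iff.mp h'

lemma st_st (K : Finset ℕ) (i : ℕ) : st K (st K i) = st K i := by
  apply le_antisymm (st_le _ _)
  rcases st_mem K i with h | h
  · omega
  · exact le_st h le_rfl

lemma Str.lt {r : ℕ} {K : Finset ℕ} {M : Finset (Finset ℕ)} (hK : K ⊆ Finset.Ico 1 r)
    (hM : IsMatching r M) (hS : Str K M) {e f : Finset ℕ} (he : e ∈ M) (hf : f ∈ M) {i j : ℕ}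
    (hj : j < r) (hst : st K i < st K j) : vtx e i < vtx f j := by
  have hm : st K j ∈ K := by
    rcases st_mem K j with h | h
    · omega
    · exact h
  have h1 := Finset.mem_Ico.mp (hK hm)
  have h2 := st_le K j
  have h3 : i < st K j := by
    by_contra hn
    have := le_st hm (not_lt.mp hn)
    omega
  calc vtx e i ≤ vtx e (st K j - 1) := vtx_le (by omega) (by rw [hM.1 e he]; omega)
    _ < vtx f (st K j) := hS _ hm e he f hf
    _ ≤ vtx f j := vtx_le h2 (by rw [hM.1 f hf]; exact hj)

lemma twins_of_sep {r : ℕ} (hr : 2 ≤ r) {K : Finset ℕ} {M : Finset (Finset ℕ)}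
    (hK : K ⊆ Finset.Ico 1 r) (hKne : K.Nonempty) (hM : IsMatching r M) (hS : Str K M)
    (hsep : ∀ e ∈ M, ∀ f ∈ M, e ≠ f → ∀ i < r, ∀ j < r, st K i = st K j →
      (vtx e i < vtx f j ↔ vtx e (st K i) < vtx f (st K i)))
    (S : ℕ) (hc : S ^ (2 ^ (K.card - 1)) ≤ M.card) : HasTwins M (permTau S) := by
  classical
  obtain ⟨j0, hj0⟩ := hKne
  have hKr : ∀ j ∈ K, j < r := fun j hj => (Finset.mem_Ico.mp (hK hj)).2
  have hinj : ∀ j < r, Set.InjOn (fun e => vtx e j) (M : Set (Finset ℕ)) := by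
    intro j hj e he f hf hef
    by_contra hn
    exact hM.vtx_ne he hf hn hj hj hef
  rw [← Finset.card_erase_of_mem hj0] at hc
  obtain ⟨M1, hM1, hc1, hES⟩ := erdos_szekeres_multi (fun e => vtx e 0) (fun j e => vtx e j) S
    (K.erase j0) M (hinj 0 (by omega))
    (fun j hj => hinj j (hKr j (Finset.mem_of_mem_erase hj))) hc
  obtain ⟨M2, hM2, rfl⟩ := Finset.exists_subset_card_eq hc1
  have hM2M : M2 ⊆ M := hM2.trans hM1
  obtain ⟨u, hu, hu0⟩ := exists_enum (fun e => vtx e 0) M2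
    ((hinj 0 (by omega)).mono (by exact_mod_cast hM2M))
  have huM : ∀ i, u i ∈ M := fun i => hM2M (hu i)
  have huinj : Function.Injective u := by
    intro i j hij
    have h1 := hu0 i j
    have h2 := hu0 j i
    rw [hij] at h1 h2
    simp only [lt_irrefl, false_iff, not_lt] at h1 h2
    exact le_antisymm h2 h1
  obtain ⟨π, hπ⟩ := exists_perm (fun i => vtx (u i) j0) (by
    intro i j hij
    exact huinj (hinj j0 (hKr j0 hj0) (huM i) (huM j) hij))
  obtain ⟨a, b, ha, hb, hab, hπab⟩ := permTau_spec _ π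
  refine hasTwins_of_seq (by omega) hM (fun p => u (a p)) (fun p => u (b p)) (fun p => huM _)
    (fun p => huM _) (huinj.comp ha.injective) (huinj.comp hb.injective)
    (fun p q h => hab p q (huinj h)) ?_
  intro p q hpq i hi j hj
  rcases lt_trichotomy (st K i) (st K j) with hlt | heq | hgt
  · exact ⟨fun _ => Str.lt hK hM hS (huM _) (huM _) hj hlt,
      fun _ => Str.lt hK hM hS (huM _) (huM _) hj hlt⟩
  · have hne1 : u (a p) ≠ u (a q) := fun h => hpq (ha.injective (huinj h))
    have hne2 : u (b p) ≠ u (b q) := fun h => hpq (hb.injective (huinj h))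
    rw [hsep _ (huM _) _ (huM _) hne1 i hi j hj heq, hsep _ (huM _) _ (huM _) hne2 i hi j hj heq]
    have h0 : ∀ p q, (vtx (u (a p)) 0 < vtx (u (a q)) 0 ↔ vtx (u (b p)) 0 < vtx (u (b q)) 0) := by
      intro p q
      rw [hu0, hu0, ha.lt_iff_lt, hb.lt_iff_lt]
    rcases st_mem K i with h | h
    · rw [h]; exact h0 p q
    · by_cases hj : st K i = j0
      · rw [hj]
        have h1 := hπ (a p) (a q)
        have h2 := hπ (b p) (b q)
        rw [← h1, ← h2]
        exact hπab p q
      · rcases hES (st K i) (Finset.mem_erase.mpr ⟨hj, h⟩) with h' | h'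
        · rw [← h' _ (hM2 (hu _)) _ (hM2 (hu _)), ← h' _ (hM2 (hu _)) _ (hM2 (hu _))]
          exact h0 p q
        · rw [← h' _ (hM2 (hu _)) _ (hM2 (hu _)), ← h' _ (hM2 (hu _)) _ (hM2 (hu _))]
          exact h0 q p
  · have h1 := Str.lt hK hM hS (huM (a q)) (huM (a p)) hi hgt
    have h2 := Str.lt hK hM hS (huM (b q)) (huM (b p)) hi hgt
    exact ⟨fun h => absurd h (not_lt.mpr h1.le), fun h => absurd h (not_lt.mpr h2.le)⟩

/-- relation: the beginning of some block of `f` lies inside a gap of `e`. -/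
def Conf (r : ℕ) (K : Finset ℕ) (e f : Finset ℕ) : Prop :=
  ∃ j ∈ Finset.Ico 1 r \ K, vtx e (j - 1) < vtx f (st K j) ∧ vtx f (st K j) < vtx e j

lemma sep_aux {r : ℕ} {K : Finset ℕ} {M : Finset (Finset ℕ)} (hM : IsMatching r M)
    {e f : Finset ℕ} (he : e ∈ M) (hf : f ∈ M) (hef : e ≠ f) (hc : ¬ Conf r K e f) {s : ℕ}
    (hlt : vtx e s < vtx f s) : ∀ i, s ≤ i → i < r → st K i = s → vtx e i < vtx f s := by
  intro i hsi
  induction i, hsi using Nat.le_induction with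
  | base => intro _ _; exact hlt
  | succ i hi ih =>
    intro hir hst
    have hnK : i + 1 ∉ K := by
      intro h
      have := le_st h le_rfl
      omega
    have h1 := ih (by omega) (by rw [← st_succ_of_notMem hnK]; exact hst)
    by_contra hn
    have hne := hM.vtx_ne he hf hef hir (show s < r by omega)
    refine hc ⟨i + 1, ?_, ?_, ?_⟩
    · rw [Finset.mem_sdiff, Finset.mem_Ico]
      exact ⟨⟨by omega, hir⟩, hnK⟩
    · rw [hst]; exact h1
    · rw [hst]; omega

lemma sep_of_not_conf {r : ℕ} {K : Finset ℕ} {M : Finset (Finset ℕ)} (hM : IsMatching r M)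
    {e f : Finset ℕ} (he : e ∈ M) (hf : f ∈ M) (hef : e ≠ f) (hc : ¬ Conf r K e f)
    (hc' : ¬ Conf r K f e) : ∀ i < r, ∀ j < r, st K i = st K j →
      (vtx e i < vtx f j ↔ vtx e (st K i) < vtx f (st K i)) := by
  intro i hi j hj hij
  have hsi := st_le K i
  have hsj := st_le K j
  have hne := hM.vtx_ne he hf hef (show st K i < r by omega) (show st K i < r by omega)
  have m1 : vtx e (st K i) ≤ vtx e i := vtx_le hsi (by rw [hM.1 e he]; exact hi)
  have m2 : vtx f (st K i) ≤ vtx f j := vtx_le (by omega) (by rw [hM.1 f hf]; exact hj)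
  rcases lt_or_gt_of_ne hne with h | h
  · have := sep_aux hM he hf hef hc h i hsi hi rfl
    exact ⟨fun _ => h, fun _ => by omega⟩
  · have := sep_aux hM hf he hef.symm hc' h j (by omega) hj hij.symm
    constructor <;> intro _ <;> omega

/-- the number of edges needed with `κ` cuts and `g` gaps. -/
def need (S : ℕ) : ℕ → ℕ → ℕ
  | κ, 0 => S ^ (2 ^ (κ - 1))
  | κ, g + 1 => (2 * (g + 1) + 1) * S ^ (2 ^ (κ - 1)) * need S (κ + 1) g

lemma twins_of_str {r : ℕ} (hr : 2 ≤ r) (S : ℕ) : ∀ (g : ℕ) (K : Finset ℕ)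
    (M : Finset (Finset ℕ)), K ⊆ Finset.Ico 1 r → K.Nonempty → (Finset.Ico 1 r \ K).card = g →
    IsMatching r M → Str K M → need S K.card g ≤ M.card → HasTwins M (permTau S) := by
  classical
  intro g
  induction g with
  | zero =>
    intro K M hK hKne hg hM hS hc
    rw [Finset.card_eq_zero] at hg
    have hnc : ∀ e f, ¬ Conf r K e f := by
      rintro e f ⟨j, hj, -⟩
      rw [hg] at hj
      exact absurd hj (Finset.notMem_empty _)
    exact twins_of_sep hr hK hKne hM hS
      (fun e he f hf hef => sep_of_not_conf hM he hf hef (hnc _ _) (hnc _ _)) S hc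
  | succ g ih =>
    intro K M hK hKne hg hM hS hc
    set G := need S (K.card + 1) g with hG
    by_cases hbig : ∃ j ∈ Finset.Ico 1 r \ K, ∃ x : ℕ,
        G ≤ (M.filter (fun e => vtx e (j - 1) < x ∧ x < vtx e j)).card
    · obtain ⟨j, hj, x, hx⟩ := hbig
      have hj' := Finset.mem_sdiff.mp hj
      refine (ih (insert j K) (M.filter (fun e => vtx e (j - 1) < x ∧ x < vtx e j)) ?_ ?_ ?_ ?_ ?_
        ?_).mono (Finset.filter_subset _ _)
      · exact Finset.insert_subset hj'.1 hK
      · exact Finset.insert_nonempty _ _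
      · rw [Finset.sdiff_insert, Finset.card_erase_of_mem hj, hg]; rfl
      · exact hM.subset (Finset.filter_subset _ _)
      · intro l hl e he f hf
        rw [Finset.mem_filter] at he hf
        rcases Finset.mem_insert.mp hl with rfl | hl
        · exact he.2.1.trans hf.2.2
        · exact hS l hl e he.1 f hf.1
      · rw [Finset.card_insert_of_notMem hj'.2]
        exact hx
    · push Not at hbig
      have hdeg : ∀ f ∈ M, (M.filter (fun e => Conf r K e f)).card ≤ (g + 1) * (G - 1) := by
        intro f hf
        have hsub : M.filter (fun e => Conf r K e f) ⊆ (Finset.Ico 1 r \ K).biUnion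
            (fun j => M.filter (fun e => vtx e (j - 1) < vtx f (st K j) ∧
              vtx f (st K j) < vtx e j)) := by
          intro e he
          rw [Finset.mem_filter] at he
          obtain ⟨heM, j, hj, h1⟩ := he
          rw [Finset.mem_biUnion]
          exact ⟨j, hj, Finset.mem_filter.mpr ⟨heM, h1⟩⟩
        refine (Finset.card_le_card hsub).trans ?_
        rw [← hg]
        refine Finset.card_biUnion_le_card_mul _ _ _ (fun j hj => ?_)
        have := hbig j hj (vtx f (st K j))
        omega
      obtain ⟨I, hIM, hIc, hI⟩ := exists_indep (Conf r K) _ _ M rfl hdeg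
      refine (twins_of_sep hr hK hKne (hM.subset hIM) (fun j hj e he f hf =>
        hS j hj e (hIM he) f (hIM hf)) (fun e he f hf hef =>
        sep_of_not_conf hM (hIM he) (hIM hf) hef (hI e he f hf hef) (hI f hf e he hef.symm)) S
        ?_).mono hIM
      have h1 : (2 * (g + 1) + 1) * S ^ (2 ^ (K.card - 1)) * G ≤
          (2 * ((g + 1) * (G - 1)) + 1) * I.card := by
        refine le_trans ?_ hIc
        exact hc
      have hGpos : 0 < G := by
        by_contra h0
        have hG0 : G = 0 := by omega
        obtain ⟨j, hj⟩ : (Finset.Ico 1 r \ K).Nonempty := by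
          rw [← Finset.card_pos, hg]; omega
        have := hbig j hj 0
        omega
      have h2 : 2 * ((g + 1) * (G - 1)) + 1 ≤ (2 * (g + 1) + 1) * G := by
        obtain ⟨G', hG'⟩ : ∃ G', G = G' + 1 := ⟨G - 1, by omega⟩
        rw [hG']
        simp only [Nat.add_sub_cancel]
        nlinarith
      have h3 : ((2 * (g + 1) + 1) * G) * S ^ (2 ^ (K.card - 1)) ≤ ((2 * (g + 1) + 1) * G) * I.card := by
        calc _ = (2 * (g + 1) + 1) * S ^ (2 ^ (K.card - 1)) * G := by ring
          _ ≤ _ := h1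
          _ ≤ _ := Nat.mul_le_mul_right _ h2
      exact Nat.le_of_mul_le_mul_left h3 (by positivity)

/-- product of the constants. -/
def oddProd : ℕ → ℕ
  | 0 => 1
  | g + 1 => (2 * (g + 1) + 1) * oddProd g

lemma need_eq (S : ℕ) : ∀ g κ : ℕ,
    need S (κ + 1) g = oddProd g * S ^ (2 ^ κ * (2 ^ (g + 1) - 1)) := by
  intro g
  induction g with
  | zero => intro κ; simp [need, oddProd]
  | succ g ih =>
    intro κ
    rw [need, ih, oddProd]
    have : 2 ^ κ * (2 ^ (g + 1 + 1) - 1) = 2 ^ κ + 2 ^ (κ + 1) * (2 ^ (g + 1) - 1) := by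
      have h1 : 1 ≤ 2 ^ (g + 1) := Nat.one_le_two_pow
      obtain ⟨y, hy⟩ : ∃ y, 2 ^ (g + 1) = y + 1 := ⟨2 ^ (g + 1) - 1, by omega⟩
      have h2 : 2 ^ (g + 1 + 1) - 1 = 2 * y + 1 := by rw [pow_succ, hy]; omega
      rw [h2, hy, pow_succ]
      simp only [Nat.add_sub_cancel]
      ring
    rw [this, pow_add]
    simp only [Nat.add_sub_cancel]
    ring

/-! ### Crossing edges and superadditivity -/

/-- edges crossing the cut in front of `x`. -/
noncomputable def crossing (M : Finset (Finset ℕ)) (x : ℕ) : Finset (Finset ℕ) := by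
  classical
  exact M.filter (fun e => (∃ v ∈ e, v < x) ∧ ∃ w ∈ e, x ≤ w)

lemma mem_crossing {M : Finset (Finset ℕ)} {x : ℕ} {e : Finset ℕ} :
    e ∈ crossing M x ↔ e ∈ M ∧ (∃ v ∈ e, v < x) ∧ ∃ w ∈ e, x ≤ w := by
  simp [crossing]

lemma twins_of_crossing {r : ℕ} (hr : 2 ≤ r) (S : ℕ) {M : Finset (Finset ℕ)}
    (hM : IsMatching r M) (x : ℕ) (hc : (r - 1) * need S 1 (r - 2) ≤ (crossing M x).card) :
    HasTwins M (permTau S) := by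
  classical
  have hsub : crossing M x ⊆ (Finset.Ico 1 r).biUnion
      (fun j => M.filter (fun e => vtx e (j - 1) < x ∧ x ≤ vtx e j)) := by
    intro e he
    obtain ⟨heM, ⟨v, hv, hvx⟩, w, hw, hwx⟩ := mem_crossing.mp he
    obtain ⟨i, hi, rfl⟩ := exists_vtx hv
    obtain ⟨i', hi', rfl⟩ := exists_vtx hw
    have hcard := hM.1 e heM
    have hex : ∃ j, x ≤ vtx e j := ⟨i', hwx⟩
    have h1 : Nat.find hex ≤ i' := Nat.find_min' hex hwx
    have h2 : 1 ≤ Nat.find hex := by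
      by_contra h0
      have h00 : Nat.find hex = 0 := by omega
      have h3 := Nat.find_spec hex
      rw [h00] at h3
      have := vtx_le (Nat.zero_le i) hi
      omega
    have h3 := Nat.find_min hex (m := Nat.find hex - 1) (by omega)
    rw [Finset.mem_biUnion]
    refine ⟨Nat.find hex, Finset.mem_Ico.mpr ⟨h2, by omega⟩, Finset.mem_filter.mpr ⟨heM, ?_, ?_⟩⟩
    · omega
    · exact Nat.find_spec hex
  by_cases hbig : ∃ j ∈ Finset.Ico 1 r,
      need S 1 (r - 2) ≤ (M.filter (fun e => vtx e (j - 1) < x ∧ x ≤ vtx e j)).card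
  · obtain ⟨j, hj, hjc⟩ := hbig
    refine (twins_of_str hr S (r - 2) {j} (M.filter (fun e => vtx e (j - 1) < x ∧ x ≤ vtx e j))
      (by simpa using hj) (by simp) ?_ (hM.subset (Finset.filter_subset _ _)) ?_ ?_).mono
      (Finset.filter_subset _ _)
    · rw [Finset.card_sdiff_of_subset (by simpa using hj)]
      simp
      omega
    · intro l hl e he f hf
      rw [Finset.mem_singleton] at hl
      subst hl
      rw [Finset.mem_filter] at he hf
      exact lt_of_lt_of_le he.2.1 hf.2.2
    · rw [Finset.card_singleton]; exact hjc
  · exfalso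
    push Not at hbig
    have h1 := hbig 1 (Finset.mem_Ico.mpr ⟨le_rfl, by omega⟩)
    have h2 : (crossing M x).card ≤ (Finset.Ico 1 r).card * (need S 1 (r - 2) - 1) := by
      refine (Finset.card_le_card hsub).trans (Finset.card_biUnion_le_card_mul _ _ _ ?_)
      intro j hj
      have := hbig j hj
      omega
    rw [Nat.card_Ico] at h2
    have h3 : (r - 1) * (need S 1 (r - 2) - 1) < (r - 1) * need S 1 (r - 2) :=
      Nat.mul_lt_mul_of_pos_left (by omega) (by omega)
    omega

lemma two_mul_rpow {γ : ℝ} (hγ : γ ≤ 2 / 3) : (1 : ℝ) ≤ 2 * (3 / 8 : ℝ) ^ γ := by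
  have h1 : (3 / 8 : ℝ) ^ (2 / 3 : ℝ) ≤ (3 / 8 : ℝ) ^ γ :=
    Real.rpow_le_rpow_of_exponent_ge (by norm_num) (by norm_num) hγ
  have h2 : (1 / 2 : ℝ) ≤ (3 / 8 : ℝ) ^ (2 / 3 : ℝ) := by
    have h3 : (3 / 8 : ℝ) ^ (2 / 3 : ℝ) = (9 / 64 : ℝ) ^ (1 / 3 : ℝ) := by
      rw [show (2 / 3 : ℝ) = 2 * (1 / 3) by norm_num, Real.rpow_mul (by norm_num)]
      norm_num
    have h4 : (1 / 2 : ℝ) = (1 / 8 : ℝ) ^ (1 / 3 : ℝ) := by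
      rw [show (1 / 8 : ℝ) = (1 / 2) ^ (3 : ℝ) by norm_num, ← Real.rpow_mul (by norm_num)]
      norm_num
    rw [h3, h4]
    exact Real.rpow_le_rpow (by norm_num) (by norm_num) (by norm_num)
  linarith

lemma superadd {r : ℕ} (hr : 2 ≤ r) {A γ : ℝ} (hA : 0 ≤ A) (hγ0 : 0 ≤ γ) (hγ : γ ≤ 2 / 3)
    (hA1 : A * (12 : ℝ) ^ γ ≤ 1)
    (hcross : ∀ M, IsMatching r M → 12 ≤ M.card → ∀ x, M.card ≤ 6 * (crossing M x).card →
      ∃ k : ℕ, HasTwins M k ∧ A * (M.card : ℝ) ^ γ ≤ k) :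
    ∀ (n : ℕ) (M : Finset (Finset ℕ)), M.card = n → IsMatching r M → 2 ≤ n →
      ∃ k : ℕ, HasTwins M k ∧ A * (n : ℝ) ^ γ ≤ k := by
  classical
  intro n
  induction n using Nat.strong_induction_on with
  | _ n ih =>
  intro M hn hM h2
  by_cases h12 : n < 12
  · refine ⟨1, hasTwins_one (by omega) hM (by omega), ?_⟩
    have : (n : ℝ) ^ γ ≤ (12 : ℝ) ^ γ :=
      Real.rpow_le_rpow (by positivity) (by exact_mod_cast h12.le) hγ0
    push_cast
    nlinarith
  by_cases hx : ∃ x, M.card ≤ 6 * (crossing M x).card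
  · obtain ⟨x, hx⟩ := hx
    have := hcross M hM (by omega) x hx
    rw [hn] at this
    exact this
  push Not at hx
  let Lf : ℕ → Finset (Finset ℕ) := fun x => M.filter (fun e => ∀ v ∈ e, v < x)
  let Rf : ℕ → Finset (Finset ℕ) := fun x => M.filter (fun e => ∀ v ∈ e, x ≤ v)
  have hne : ∀ e ∈ M, e.Nonempty := by
    intro e he
    rw [← Finset.card_pos, hM.1 e he]
    omega
  have hL0 : Lf 0 = ∅ := by
    apply Finset.filter_eq_empty_iff.mpr
    intro e he h
    obtain ⟨v, hv⟩ := hne e he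
    exact absurd (h v hv) (by omega)
  have hLbig : Lf (mSupport M).card.succ ⊆ M := Finset.filter_subset _ _
  have hLtop : ∃ x, Lf x = M := by
    refine ⟨(mSupport M).sup id + 1, Finset.filter_true_of_mem ?_⟩
    intro e he v hv
    have : v ≤ (mSupport M).sup id :=
      Finset.le_sup (f := id) (mem_mSupport.mpr ⟨e, he, hv⟩)
    omega
  have hstep : ∀ x, (Lf (x + 1)).card ≤ (Lf x).card + 1 := by
    intro x
    have hsub : Lf (x + 1) ⊆ Lf x ∪ M.filter (fun e => x ∈ e) := by
      intro e he
      rw [Finset.mem_filter] at he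
      rw [Finset.mem_union, Finset.mem_filter, Finset.mem_filter]
      by_cases hxe : x ∈ e
      · exact Or.inr ⟨he.1, hxe⟩
      · refine Or.inl ⟨he.1, fun v hv => ?_⟩
        have := he.2 v hv
        have : v ≠ x := fun h => hxe (h ▸ hv)
        omega
    have hone : (M.filter (fun e => x ∈ e)).card ≤ 1 := by
      rw [Finset.card_le_one]
      intro e he f hf
      rw [Finset.mem_filter] at he hf
      by_contra hef
      exact Finset.disjoint_left.mp (hM.2 e he.1 f hf.1 hef) he.2 hf.2
    have h1 := Finset.card_le_card hsub
    have h2 := Finset.card_union_le (Lf x) (M.filter (fun e => x ∈ e))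
    omega
  obtain ⟨m, hm⟩ : ∃ m, m = (3 * n + 7) / 8 := ⟨_, rfl⟩
  have hex : ∃ x, m ≤ (Lf x).card := by
    obtain ⟨x, hx⟩ := hLtop
    exact ⟨x, by rw [hx]; omega⟩
  obtain ⟨x, hxm⟩ : ∃ x, (Lf x).card = m := by
    have hs := Nat.find_spec hex
    have hpos : Nat.find hex ≠ 0 := by
      intro h0
      rw [h0, hL0, Finset.card_empty] at hs
      omega
    obtain ⟨y, hy⟩ := Nat.exists_eq_succ_of_ne_zero hpos
    have hmin := Nat.find_min hex (m := y) (by omega)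
    have := hstep y
    rw [hy] at hs
    exact ⟨y + 1, by simp only [Nat.succ_eq_add_one] at hs; omega⟩
  have hcover : M ⊆ Lf x ∪ (Rf x ∪ crossing M x) := by
    intro e he
    rw [Finset.mem_union, Finset.mem_union, Finset.mem_filter, Finset.mem_filter, mem_crossing]
    by_cases h1 : ∀ v ∈ e, v < x
    · exact Or.inl ⟨he, h1⟩
    by_cases h2 : ∀ v ∈ e, x ≤ v
    · exact Or.inr (Or.inl ⟨he, h2⟩)
    push Not at h1 h2
    exact Or.inr (Or.inr ⟨he, h2, h1⟩)
  have hc1 := Finset.card_le_card hcover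
  have hc2 := Finset.card_union_le (Lf x) (Rf x ∪ crossing M x)
  have hc3 := Finset.card_union_le (Rf x) (crossing M x)
  have hxx := hx x
  have hLM : Lf x ⊆ M := Finset.filter_subset _ _
  have hRM : Rf x ⊆ M := Finset.filter_subset _ _
  have hdisj : Disjoint (Lf x) (Rf x) := by
    rw [Finset.disjoint_left]
    intro e h1 h2
    rw [Finset.mem_filter] at h1 h2
    obtain ⟨v, hv⟩ := hne e h1.1
    have := h1.2 v hv
    have := h2.2 v hv
    omega
  have hLRn : (Lf x).card + (Rf x).card ≤ n := by
    rw [← Finset.card_union_of_disjoint hdisj, ← hn]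
    exact Finset.card_le_card (Finset.union_subset hLM hRM)
  have hL8 : 3 * n ≤ 8 * (Lf x).card := by omega
  have hR8 : 3 * n ≤ 8 * (Rf x).card := by omega
  obtain ⟨k, hk, hkA⟩ := ih (Lf x).card (by omega) (Lf x) rfl (hM.subset hLM) (by omega)
  obtain ⟨l, hl, hlA⟩ := ih (Rf x).card (by omega) (Rf x) rfl (hM.subset hRM) (by omega)
  refine ⟨k + l, (hasTwins_add (x := x) ?_ ?_ ?_ hk hl).mono (Finset.union_subset hLM hRM), ?_⟩
  · intro e he; exact (Finset.mem_filter.mp he).2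
  · intro e he; exact hne e (hLM he)
  · intro e he; exact (Finset.mem_filter.mp he).2
  · have hbound : ∀ t : ℕ, 3 * n ≤ 8 * t → A * ((3 / 8 : ℝ) ^ γ * (n : ℝ) ^ γ) ≤ A * (t : ℝ) ^ γ := by
      intro t ht
      apply mul_le_mul_of_nonneg_left _ hA
      rw [← Real.mul_rpow (by norm_num) (by positivity)]
      apply Real.rpow_le_rpow (by positivity) _ hγ0
      have : (3 * n : ℝ) ≤ 8 * t := by exact_mod_cast ht
      linarith
    have b1 := hbound _ hL8
    have b2 := hbound _ hR8
    have b3 := two_mul_rpow hγ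
    have b4 : 0 ≤ A * (n : ℝ) ^ γ := by positivity
    push_cast
    nlinarith

/-! ### Numerical constants -/

/-- the constant `c_r`. -/
def cst (r : ℕ) : ℝ := if r = 2 then 1 else if r = 3 then 2 else 12 * r

lemma oddProd_le (g : ℕ) : oddProd g ≤ (2 * g + 1) ^ g := by
  induction g with
  | zero => simp [oddProd]
  | succ g ih =>
    rw [oddProd, pow_succ, mul_comm]
    apply Nat.mul_le_mul_right
    exact ih.trans (Nat.pow_le_pow_left (by omega) _)

lemma one_le_cst {r : ℕ} (hr : 2 ≤ r) : 1 ≤ cst r := by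
  have : (2 : ℝ) ≤ r := by exact_mod_cast hr
  unfold cst
  split_ifs <;> linarith

lemma cst_bound {r : ℕ} (hr : 2 ≤ r) :
    ((r - 1 : ℕ) : ℝ) * (oddProd (r - 2) : ℝ) * (3 / 2) ^ (2 ^ (r - 1) - 1) ≤
      r * cst r ^ (2 ^ (r - 1) - 1) := by
  by_cases h2 : r = 2
  · subst h2; norm_num [cst, oddProd]
  by_cases h3 : r = 3
  · subst h3; norm_num [cst, oddProd]
  have hr4 : 4 ≤ r := by omega
  have hr4' : (4 : ℝ) ≤ r := by exact_mod_cast hr4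
  have hE : r - 2 ≤ 2 ^ (r - 1) - 1 := by
    have := Nat.lt_two_pow_self (n := r - 1)
    omega
  set E := 2 ^ (r - 1) - 1
  have hc : cst r = 12 * r := by simp [cst, h2, h3]
  have h5 : (oddProd (r - 2) : ℝ) ≤ (8 * r : ℝ) ^ E := by
    have h6 : oddProd (r - 2) ≤ (8 * r) ^ E :=
      (oddProd_le _).trans ((Nat.pow_le_pow_left (by omega) _).trans
        (Nat.pow_le_pow_right (by omega) hE))
    exact_mod_cast h6
  have h7 : ((r - 1 : ℕ) : ℝ) ≤ r := by exact_mod_cast Nat.sub_le r 1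
  rw [hc, show (12 * (r : ℝ)) = (8 * r) * (3 / 2) by ring, mul_pow, mul_assoc]
  apply mul_le_mul h7 _ (by positivity) (by positivity)
  exact mul_le_mul_of_nonneg_right h5 (by positivity)

/-! ### Existence of ordered matchings, and the definition of `minTwins` -/

lemma exists_ordered (r n : ℕ) (hr : 0 < r) : ∃ M, IsOrderedMatching r n M := by
  classical
  have hinj : ∀ i j x : ℕ, x ∈ Finset.Icc (r * i + 1) (r * i + r) →
      x ∈ Finset.Icc (r * j + 1) (r * j + r) → i = j := by
    intro i j x hi hj
    rw [Finset.mem_Icc] at hi hj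
    by_contra hne
    rcases lt_or_gt_of_ne hne with h | h
    · have : r * (i + 1) ≤ r * j := Nat.mul_le_mul_left _ h
      rw [mul_add] at this
      omega
    · have : r * (j + 1) ≤ r * i := Nat.mul_le_mul_left _ h
      rw [mul_add] at this
      omega
  refine ⟨(Finset.range n).image (fun i => Finset.Icc (r * i + 1) (r * i + r)), ⟨?_, ?_⟩, ?_, ?_⟩
  · intro e he
    obtain ⟨i, -, rfl⟩ := Finset.mem_image.mp he
    rw [Nat.card_Icc]; omega
  · intro e he f hf hef
    obtain ⟨i, -, rfl⟩ := Finset.mem_image.mp he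
    obtain ⟨j, -, rfl⟩ := Finset.mem_image.mp hf
    rw [Finset.disjoint_left]
    intro x hx hy
    exact hef (by rw [hinj i j x hx hy])
  · rw [Finset.card_image_of_injective, Finset.card_range]
    intro i j hij
    refine hinj i j (r * i + 1) (Finset.mem_Icc.mpr ⟨le_rfl, by omega⟩) ?_
    simp only at hij
    rw [← hij]
    exact Finset.mem_Icc.mpr ⟨le_rfl, by omega⟩
  · ext x
    rw [mem_mSupport, Finset.mem_Icc]
    constructor
    · rintro ⟨e, he, hx⟩
      obtain ⟨i, hi, rfl⟩ := Finset.mem_image.mp he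
      rw [Finset.mem_Icc] at hx
      rw [Finset.mem_range] at hi
      have : r * (i + 1) ≤ r * n := Nat.mul_le_mul_left _ hi
      rw [mul_add] at this
      omega
    · rintro ⟨h1, h2⟩
      refine ⟨_, Finset.mem_image.mpr ⟨(x - 1) / r, ?_, rfl⟩, ?_⟩
      · rw [Finset.mem_range, Nat.div_lt_iff_lt_mul hr, mul_comm]
        omega
      · rw [Finset.mem_Icc]
        have := Nat.div_add_mod (x - 1) r
        have := Nat.mod_lt (x - 1) hr
        omega

lemma HasTwins.le_twinMax {M : Finset (Finset ℕ)} {k : ℕ} (h : HasTwins M k) : k ≤ twinMax M := by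
  refine le_csSup (s := {k | HasTwins M k}) ⟨M.card, ?_⟩ h
  rintro l ⟨A, B, hA, -, -, -, rfl, -⟩
  exact Finset.card_le_card hA

lemma main_aux {α β : ℝ} (hα₁ : 3 / 5 ≤ α) (hα₂ : α ≤ 2 / 3) (hβ : 0 < β)
    (htau : ∀ n : ℕ, 2 ≤ n → β * (n : ℝ) ^ α ≤ (permTau n : ℝ)) {r : ℕ} (hr : 2 ≤ r)
    {M : Finset (Finset ℕ)} (hM : IsMatching r M) (hn : 2 ≤ M.card) :
    ∃ k : ℕ, HasTwins M k ∧
      β * cst r ^ (-α) * ((M.card : ℝ) / (6 * r)) ^ (α * etaExp (r - 1)) ≤ k := by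
  have hα0 : 0 ≤ α := by linarith
  have hr0 : (2 : ℝ) ≤ r := by exact_mod_cast hr
  have hc1 := one_le_cst hr
  obtain ⟨E, hE⟩ : ∃ E, E = 2 ^ (r - 1) - 1 := ⟨_, rfl⟩
  have hE1 : 1 ≤ E := by
    have : 2 ^ 1 ≤ 2 ^ (r - 1) := Nat.pow_le_pow_right (by norm_num) (by omega)
    omega
  have hE1' : (1 : ℝ) ≤ E := by exact_mod_cast hE1
  have heta : etaExp (r - 1) = 1 / (E : ℝ) := by
    have : 1 ≤ 2 ^ (r - 1) := Nat.one_le_two_pow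
    rw [etaExp, hE, Nat.cast_sub this]
    push_cast
    rfl
  rw [heta]
  have hη0 : (0 : ℝ) ≤ 1 / E := by positivity
  have hη1 : (1 : ℝ) / E ≤ 1 := by rw [div_le_one (by linarith)]; exact hE1'
  have hβ2 : β * (2 : ℝ) ^ α ≤ 1 := by
    have h1 := htau 2 le_rfl
    have h2 := permTau_le 2
    have h3 : (permTau 2 : ℝ) ≤ 1 := by exact_mod_cast (show permTau 2 ≤ 1 by omega)
    push_cast at h1
    linarith
  have hβ1 : β ≤ 1 := by
    have : (1 : ℝ) ≤ (2 : ℝ) ^ α := Real.one_le_rpow (by norm_num) hα0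
    nlinarith
  have hcα : cst r ^ (-α) ≤ 1 := Real.rpow_le_one_of_one_le_of_nonpos hc1 (by linarith)
  have hcα0 : 0 < cst r ^ (-α) := Real.rpow_pos_of_pos (by linarith) _
  set γ := α * (1 / (E : ℝ)) with hγdef
  have hγ0 : 0 ≤ γ := by positivity
  have hγ : γ ≤ 2 / 3 := by
    have : γ ≤ α * 1 := mul_le_mul_of_nonneg_left hη1 hα0
    linarith
  have hsplit : ∀ n : ℕ, ((n : ℝ) / (6 * r)) ^ γ = ((6 * r : ℝ) ^ γ)⁻¹ * (n : ℝ) ^ γ := by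
    intro n
    rw [Real.div_rpow (by positivity) (by positivity), div_eq_inv_mul]
  have hform : ∀ n : ℕ, β * cst r ^ (-α) * ((n : ℝ) / (6 * r)) ^ γ =
      (β * cst r ^ (-α) * ((6 * r : ℝ) ^ γ)⁻¹) * (n : ℝ) ^ γ := by
    intro n
    rw [hsplit]
    ring
  rw [hform]
  refine superadd hr (by positivity) hγ0 hγ ?_ ?_ M.card M rfl hM hn
  · have h1 : (12 : ℝ) ^ γ ≤ (6 * r : ℝ) ^ γ :=
      Real.rpow_le_rpow (by norm_num) (by linarith) hγ0
    have h2 : 0 < (6 * r : ℝ) ^ γ := by positivity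
    have h3 : ((6 * r : ℝ) ^ γ)⁻¹ * (12 : ℝ) ^ γ ≤ 1 := by
      rw [inv_mul_le_iff₀ h2]; linarith
    have h4 : β * cst r ^ (-α) ≤ 1 := mul_le_one₀ hβ1 hcα0.le hcα
    rw [mul_assoc]
    exact mul_le_one₀ h4 (by positivity) h3
  · intro N hN hN12 x hx
    rw [← hform]
    obtain ⟨n, hnN⟩ : ∃ n, n = N.card := ⟨_, rfl⟩
    rw [← hnN]
    have hn12 : (12 : ℝ) ≤ n := by exact_mod_cast (hnN ▸ hN12)
    have hq : (0 : ℝ) ≤ (n : ℝ) / (6 * r) := by positivity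
    obtain ⟨s, hs⟩ : ∃ s : ℝ, s = ((n : ℝ) / (6 * r)) ^ (1 / (E : ℝ)) / cst r := ⟨_, rfl⟩
    have hs0 : 0 ≤ s := by rw [hs]; positivity
    have hsα : β * cst r ^ (-α) * ((n : ℝ) / (6 * r)) ^ γ = β * s ^ α := by
      have hcp : 0 ≤ cst r := by linarith
      rw [hs, Real.div_rpow (Real.rpow_nonneg hq (1 / (E : ℝ))) hcp, ← Real.rpow_mul hq,
        Real.rpow_neg (by linarith), hγdef, mul_comm (1 / (E : ℝ)) α]
      ring
    rw [hsα]
    by_cases hs2 : s ≤ 2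
    · refine ⟨1, hasTwins_one (by omega) hN (by omega), ?_⟩
      have : s ^ α ≤ (2 : ℝ) ^ α := Real.rpow_le_rpow hs0 hs2 hα0
      push_cast
      nlinarith
    · push Not at hs2
      have hle := Nat.le_ceil s
      have hlt := Nat.ceil_lt_add_one hs0
      set S := ⌈s⌉₊ with hSdef
      have hS2 : 2 ≤ S := by
        have : (2 : ℝ) ≤ S := by linarith
        exact_mod_cast this
      have hS32 : (S : ℝ) ≤ 3 / 2 * s := by linarith
      refine ⟨permTau S, twins_of_crossing hr S hN x ?_, ?_⟩
      · have hneed := need_eq S (r - 2) 0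
        rw [show r - 2 + 1 = r - 1 by omega, pow_zero, one_mul, ← hE, zero_add] at hneed
        rw [hneed]
        have hsE : (cst r * s) ^ E = (n : ℝ) / (6 * r) := by
          rw [hs, mul_div_cancel₀ _ (by linarith), ← Real.rpow_natCast, ← Real.rpow_mul hq,
            one_div, inv_mul_cancel₀ (by linarith), Real.rpow_one]
        have hb := cst_bound hr
        rw [← hE] at hb
        have hxr : (n : ℝ) ≤ 6 * ((crossing N x).card : ℝ) := by
          rw [hnN]; exact_mod_cast hx
        have hfin : ((r - 1 : ℕ) : ℝ) * ((oddProd (r - 2) : ℝ) * (S : ℝ) ^ E) ≤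
            ((crossing N x).card : ℝ) := by
          calc ((r - 1 : ℕ) : ℝ) * ((oddProd (r - 2) : ℝ) * (S : ℝ) ^ E)
              ≤ ((r - 1 : ℕ) : ℝ) * ((oddProd (r - 2) : ℝ) * (3 / 2 * s) ^ E) := by gcongr
            _ = (((r - 1 : ℕ) : ℝ) * (oddProd (r - 2) : ℝ) * (3 / 2) ^ E) * s ^ E := by
              rw [mul_pow]; ring
            _ ≤ (r * cst r ^ E) * s ^ E := mul_le_mul_of_nonneg_right hb (by positivity)
            _ = r * (cst r * s) ^ E := by rw [mul_pow]; ring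
            _ = n / 6 := by rw [hsE]; field_simp
            _ ≤ _ := by linarith
        exact_mod_cast hfin
      · refine le_trans ?_ (htau S hS2)
        exact mul_le_mul_of_nonneg_left (Real.rpow_le_rpow hs0 hle hα0) hβ.le

lemma B_le {α β : ℝ} (B : ℕ → ℝ) (hB2 : B 2 = β)
    (hBrec : ∀ r : ℕ, 3 ≤ r → B r = sInf (insert (β * (2 : ℝ) ^ (-α))
      {x : ℝ | ∃ p : ℕ, 2 ≤ p ∧ p ≤ r - 2 ∧
        x = B p * (12 * (r : ℝ)) ^ (-(α * etaExp (p - 1)))})) {r : ℕ} (hr : 2 ≤ r) :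
    B r ≤ β * cst r ^ (-α) := by
  by_cases h2 : r = 2
  · subst h2; simp [cst, hB2]
  have hfin : (insert (β * (2 : ℝ) ^ (-α)) {x : ℝ | ∃ p : ℕ, 2 ≤ p ∧ p ≤ r - 2 ∧
        x = B p * (12 * (r : ℝ)) ^ (-(α * etaExp (p - 1)))}).Finite := by
    apply Set.Finite.insert
    refine ((Set.finite_Iic (r - 2)).image
      (fun p => B p * (12 * (r : ℝ)) ^ (-(α * etaExp (p - 1))))).subset ?_
    rintro x ⟨p, -, hp, rfl⟩
    exact ⟨p, hp, rfl⟩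
  rw [hBrec r (by omega)]
  apply csInf_le hfin.bddBelow
  by_cases h3 : r = 3
  · left; simp [cst, h3]
  · right
    refine ⟨2, le_rfl, by omega, ?_⟩
    have he : etaExp (2 - 1) = 1 := by norm_num [etaExp]
    rw [he, hB2, mul_one]
    simp [cst, h2, h3]

/-- Corollary 3.3, `corol`. If `3/5 ≤ α ≤ 2/3`, `β > 0` and
`τ(n) ≥ β·n^α` for all `n ≥ 2`, then for all `r ≥ 2` and `n ≥ 2`,
`t^(r)(n) ≥ β_r·(n/(6r))^{α·η_{r-1}}`, where `β_2 = β` and, for `r ≥ 3`,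
`β_r = min{min_{2 ≤ p ≤ r-2} β_p·(12r)^{-α·η_{p-1}}, β·2^{-α}}` (the minimum of
the set consisting of `β·2^{-α}` together with all `β_p·(12r)^{-α·η_{p-1}}`,
`2 ≤ p ≤ r-2`; for `r = 3` this set is just `{β·2^{-α}}`). The sequence `β_r` is
encoded as any function `B : ℕ → ℝ` satisfying this recurrence. -/
theorem corollary_recursive_bound (α β : ℝ) (hα₁ : 3 / 5 ≤ α) (hα₂ : α ≤ 2 / 3)
    (hβ : 0 < β)
    (htau : ∀ n : ℕ, 2 ≤ n → β * (n : ℝ) ^ α ≤ (permTau n : ℝ))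
    (B : ℕ → ℝ) (hB2 : B 2 = β)
    (hBrec : ∀ r : ℕ, 3 ≤ r → B r = sInf (insert (β * (2 : ℝ) ^ (-α))
      {x : ℝ | ∃ p : ℕ, 2 ≤ p ∧ p ≤ r - 2 ∧
        x = B p * (12 * (r : ℝ)) ^ (-(α * etaExp (p - 1)))})) :
    ∀ r : ℕ, 2 ≤ r → ∀ n : ℕ, 2 ≤ n →
      B r * ((n : ℝ) / (6 * r)) ^ (α * etaExp (r - 1)) ≤ (minTwins r n : ℝ) := by
  intro r hr n hn
  have hne : {t | ∃ M, IsOrderedMatching r n M ∧ twinMax M = t}.Nonempty := by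
    obtain ⟨M, hM⟩ := exists_ordered r n (by omega)
    exact ⟨_, M, hM, rfl⟩
  obtain ⟨M, hM, hMt⟩ := Nat.sInf_mem hne
  obtain ⟨k, hk, hkb⟩ := main_aux hα₁ hα₂ hβ htau hr hM.1 (by rw [hM.2.1]; exact hn)
  rw [hM.2.1] at hkb
  have h1 : k ≤ minTwins r n := by
    have := hk.le_twinMax
    rw [hMt] at this
    exact this
  have h2 : (k : ℝ) ≤ (minTwins r n : ℝ) := by exact_mod_cast h1
  refine le_trans (le_trans ?_ hkb) h2
  exact mul_le_mul_of_nonneg_right (B_le B hB2 hBrec hr) (by positivity)
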